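/- (Leibniz rule for the skew-q-derivative.) Let q > 1 be real, r, s naturals, and f, g : ℕ → ℝ → ℝ coefficient families with f_i = 0 for i > r and g_i = 0 for i > s. Then for every natural φ, every real λ, every Y ∈ ℝ and every X ≠ 0: the φ-fold skew-q-derivative in X of the function X ↦ Σ_{u=0}^{r+s} (Σ_{i=0}^{u} q^{2is} f_i(λ) g_{u−i}(λ−2i)) Y^u X^{r+s−u} equals Σ_{ℓ=0}^{φ} [φ;ℓ] q^{2(φ−ℓ)(r−ℓ)} Σ_{u=0}^{r+s−φ} (Σ_{i=0}^{u} q^{2i(s−(φ−ℓ))} f_i(λ) β(r−i, ℓ) g_{u−i}(λ−2i) β(s−(u−i), φ−ℓ)) Y^u X^{r+s−φ−u}; here the inner sum is the skew-q-product of the ℓ-th skew-q-derivative of f (degree r−ℓ, coefficients f_i(λ)β(r−i,ℓ)) with the (φ−ℓ)-th skew-q-derivative of g (degree s−(φ−ℓ), coefficients g_j(λ)β(s−j,φ−ℓ)). -/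

import Mathlib

/-- The skew-q-nary Gaussian coefficient `[x;k]` for real `x`. -/
noncomputable def gaussQ (q x : ℝ) (k : ℕ) : ℝ :=
  ∏ i ∈ Finset.range k, (q ^ (2 * x) - q ^ (2 * (i : ℝ))) / (q ^ (2 * (k : ℝ)) - q ^ (2 * (i : ℝ)))

/-- The skew-q-nary Beta function `β(x,k)`. -/
noncomputable def betaQ (q x : ℝ) (k : ℕ) : ℝ :=
  ∏ i ∈ Finset.range k, (q ^ (2 * (x - (i : ℝ))) - 1) / (q ^ 2 - 1)

/-- The skew-q-derivative operator. -/
noncomputable def qDeriv (q : ℝ) (h : ℝ → ℝ) : ℝ → ℝ :=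
  fun X => (h (q ^ 2 * X) - h X) / ((q ^ 2 - 1) * X)

theorem gaussQ_zero (q x : ℝ) : gaussQ q x 0 = 1 := by
  simp [gaussQ]

theorem betaQ_zero (q x : ℝ) : betaQ q x 0 = 1 := by
  simp [betaQ]

theorem betaQ_succ (q x : ℝ) (k : ℕ) :
    betaQ q x (k + 1) = betaQ q x k * ((q ^ (2 * (x - (k : ℝ))) - 1) / (q ^ 2 - 1)) :=
  Finset.prod_range_succ _ _

theorem betaQ_natCast_eq_zero (q : ℝ) {m k : ℕ} (h : m < k) : betaQ q (m : ℝ) k = 0 :=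
  Finset.prod_eq_zero (Finset.mem_range.2 h) (by simp)

theorem gaussQ_natCast_eq_zero (q : ℝ) {n k : ℕ} (h : n < k) : gaussQ q (n : ℝ) k = 0 :=
  Finset.prod_eq_zero (Finset.mem_range.2 h) (by simp)

/-- The numerator of the Gaussian coefficient `[x;k]`. -/
noncomputable def gaussNum (q x : ℝ) (k : ℕ) : ℝ :=
  ∏ i ∈ Finset.range k, (q ^ (2 * x) - q ^ (2 * (i : ℝ)))

theorem gaussQ_eq_div (q x : ℝ) (k : ℕ) :
    gaussQ q x k = gaussNum q x k / gaussNum q (k : ℝ) k :=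
  Finset.prod_div_distrib _ _

theorem gaussNum_succ (q x : ℝ) (k : ℕ) :
    gaussNum q x (k + 1) = gaussNum q x k * (q ^ (2 * x) - q ^ (2 * (k : ℝ))) :=
  Finset.prod_range_succ _ _

theorem rpow_two_mul_add_one {q : ℝ} (hq : 0 < q) (x : ℝ) :
    q ^ (2 * (x + 1)) = q ^ 2 * q ^ (2 * x) := by
  rw [mul_add, Real.rpow_add hq, mul_one, Real.rpow_two, mul_comm]

theorem gaussNum_add_one_succ {q : ℝ} (hq : 0 < q) (x : ℝ) (k : ℕ) :
    gaussNum q (x + 1) (k + 1) =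
      (q ^ (2 * (x + 1)) - 1) * (q ^ 2) ^ k * gaussNum q x k := by
  unfold gaussNum
  rw [Finset.prod_range_succ']
  have h : ∀ i ∈ Finset.range k, q ^ (2 * (x + 1)) - q ^ (2 * ((i + 1 : ℕ) : ℝ)) =
      q ^ 2 * (q ^ (2 * x) - q ^ (2 * (i : ℝ))) := fun i _ => by
    push_cast
    rw [rpow_two_mul_add_one hq, rpow_two_mul_add_one hq, mul_sub]
  rw [Finset.prod_congr rfl h, Finset.prod_mul_distrib, Finset.prod_const, Finset.card_range]
  simp only [Nat.cast_zero, mul_zero, Real.rpow_zero]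
  ring

theorem gaussNum_self_ne_zero {q : ℝ} (hq : 1 < q) (k : ℕ) : gaussNum q (k : ℝ) k ≠ 0 := by
  refine Finset.prod_ne_zero_iff.2 fun i hi => (sub_pos.2 ?_).ne'
  have : (i : ℝ) < k := by exact_mod_cast Finset.mem_range.1 hi
  exact Real.rpow_lt_rpow_of_exponent_lt hq (by linarith)

theorem rpow_two_mul_natCast {q : ℝ} (hq : 0 < q) (k : ℕ) :
    q ^ (2 * (k : ℝ)) = (q ^ 2) ^ k := by
  rw [Real.rpow_mul hq.le, Real.rpow_natCast, Real.rpow_two]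

/-- The Pascal rule for Gaussian coefficients. -/
theorem gaussQ_add_one_succ {q : ℝ} (hq : 1 < q) (x : ℝ) (k : ℕ) :
    gaussQ q (x + 1) (k + 1) =
      q ^ (2 * (x - (k : ℝ))) * gaussQ q x k + gaussQ q x (k + 1) := by
  have h0 : 0 < q := by linarith
  have hD := gaussNum_self_ne_zero hq k
  have hD' := gaussNum_self_ne_zero hq (k + 1)
  have hs : gaussNum q ((k + 1 : ℕ) : ℝ) (k + 1) =
      (q ^ (2 * ((k : ℝ) + 1)) - 1) * (q ^ 2) ^ k * gaussNum q (k : ℝ) k := by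
    rw [Nat.cast_succ, gaussNum_add_one_succ h0]
  rw [hs] at hD'
  have hk : (q ^ 2) ^ k ≠ 0 := by positivity
  have hne : q ^ (2 * ((k : ℝ) + 1)) - 1 ≠ 0 := fun h => hD' (by simp [h])
  rw [gaussQ_eq_div, gaussQ_eq_div, gaussQ_eq_div, hs, gaussNum_add_one_succ h0, gaussNum_succ,
    mul_sub, Real.rpow_sub h0]
  rw [rpow_two_mul_add_one h0] at hne ⊢
  rw [rpow_two_mul_add_one h0]
  rw [rpow_two_mul_natCast h0] at hne ⊢
  field_simp
  ring

/-- The `q`-Vandermonde identity for the skew-q-nary Beta function. -/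
theorem betaQ_add {q : ℝ} (hq : 1 < q) (a b : ℝ) (n : ℕ) :
    betaQ q (a + b) n = ∑ l ∈ Finset.range (n + 1),
      gaussQ q (n : ℝ) l * (q ^ (2 * ((n : ℝ) - (l : ℝ)) * (a - (l : ℝ))) *
        (betaQ q a l * betaQ q b (n - l))) := by
  have h0 : 0 < q := by linarith
  induction n with
  | zero => simp [gaussQ_zero, betaQ_zero]
  | succ n ih =>
    have hsplit : ∀ l ∈ Finset.range (n + 1),
        gaussQ q (n : ℝ) l * (q ^ (2 * ((n : ℝ) - (l : ℝ)) * (a - (l : ℝ))) *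
          (betaQ q a l * betaQ q b (n - l))) *
            ((q ^ (2 * (a + b - (n : ℝ))) - 1) / (q ^ 2 - 1)) =
        q ^ (2 * ((n : ℝ) - (l : ℝ))) * gaussQ q (n : ℝ) l *
          (q ^ (2 * (((n + 1 : ℕ) : ℝ) - ((l + 1 : ℕ) : ℝ)) * (a - ((l + 1 : ℕ) : ℝ))) *
          (betaQ q a (l + 1) * betaQ q b (n + 1 - (l + 1)))) +
        gaussQ q (n : ℝ) l *
          (q ^ (2 * (((n + 1 : ℕ) : ℝ) - (l : ℝ)) * (a - (l : ℝ))) *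
          (betaQ q a l * betaQ q b (n + 1 - l))) := by
      intro l hl
      have hln : l ≤ n := Nat.lt_succ_iff.1 (Finset.mem_range.1 hl)
      have e1 : q ^ (2 * ((n : ℝ) - (l : ℝ)) * (a - (l : ℝ))) =
          q ^ (2 * ((n : ℝ) - (l : ℝ))) *
            q ^ (2 * (((n + 1 : ℕ) : ℝ) - ((l + 1 : ℕ) : ℝ)) * (a - ((l + 1 : ℕ) : ℝ))) := by
        rw [← Real.rpow_add h0]; push_cast; ring_nf
      have e2 : q ^ (2 * (((n + 1 : ℕ) : ℝ) - (l : ℝ)) * (a - (l : ℝ))) =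
          q ^ (2 * ((n : ℝ) - (l : ℝ)) * (a - (l : ℝ))) * q ^ (2 * (a - (l : ℝ))) := by
        rw [← Real.rpow_add h0]; push_cast; ring_nf
      have e3 : q ^ (2 * (a + b - (n : ℝ))) =
          q ^ (2 * (a - (l : ℝ))) * q ^ (2 * (b - ((n : ℝ) - (l : ℝ)))) := by
        rw [← Real.rpow_add h0]; ring_nf
      rw [e2, Nat.succ_sub hln, Nat.add_sub_add_right, betaQ_succ, betaQ_succ,
        Nat.cast_sub hln, e3, e1]
      ring
    rw [betaQ_succ, ih, Finset.sum_mul, Finset.sum_congr rfl hsplit, Finset.sum_add_distrib]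
    rw [Finset.sum_range_succ' _ (n + 1)]
    simp only [Nat.cast_succ n, gaussQ_add_one_succ hq, add_mul _ _ (_ * _)]
    rw [Finset.sum_add_distrib, add_assoc]
    congr 1
    have hlast := Finset.sum_range_succ (fun l : ℕ => gaussQ q (n : ℝ) l *
          (q ^ (2 * ((n : ℝ) + 1 - (l : ℝ)) * (a - (l : ℝ))) *
          (betaQ q a l * betaQ q b (n + 1 - l)))) (n + 1)
    rw [gaussQ_natCast_eq_zero q (Nat.lt_succ_self n), zero_mul, add_zero] at hlast
    rw [← hlast, Finset.sum_range_succ', gaussQ_zero, gaussQ_zero]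

/-- The iterated skew-q-derivative of a linear combination of monomials. -/
theorem iterate_qDeriv_sum {q : ℝ} (hq : 1 < q) {ι : Type*} (t : Finset ι) (a : ι → ℝ)
    (e : ι → ℕ) (n : ℕ) {X : ℝ} (hX : X ≠ 0) :
    ((qDeriv q)^[n] (fun Z => ∑ u ∈ t, a u * Z ^ e u)) X =
      ∑ u ∈ t, a u * betaQ q (e u : ℝ) n * X ^ (e u - n) := by
  have h0 : 0 < q := by linarith
  have h1 : q ^ 2 - 1 ≠ 0 := by nlinarith
  induction n generalizing X with
  | zero => simp [betaQ_zero]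
  | succ n ih =>
    rw [Function.iterate_succ_apply', qDeriv, ih hX, ih (mul_ne_zero (by positivity) hX),
      ← Finset.sum_sub_distrib, Finset.sum_div]
    refine Finset.sum_congr rfl fun u _ => ?_
    rw [betaQ_succ]
    rcases lt_trichotomy (e u) n with h | h | h
    · simp [betaQ_natCast_eq_zero q h]
    · simp [h]
    · obtain ⟨d, hd⟩ := Nat.exists_eq_add_of_lt h
      have e1 : (e u : ℝ) - n = ((d + 1 : ℕ) : ℝ) := by rw [hd]; push_cast; ring
      rw [e1, rpow_two_mul_natCast h0, show e u - n = d + 1 by omega,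
        show e u - (n + 1) = d by omega]
      field_simp
      ring

/-- Leibniz rule for the skew-q-derivative of a skew-q-product. -/
theorem stmt6 (q : ℝ) (hq : 1 < q) (r s : ℕ) (f g : ℕ → ℝ → ℝ)
    (hf : ∀ i, r < i → ∀ lam, f i lam = 0) (hg : ∀ i, s < i → ∀ lam, g i lam = 0)
    (φ : ℕ) (lam Y X : ℝ) (hX : X ≠ 0) :
    ((qDeriv q)^[φ] (fun Z => ∑ u ∈ Finset.range (r + s + 1),
          (∑ i ∈ Finset.range (u + 1), q ^ (2 * i * s) * f i lam * g (u - i) (lam - 2 * (i : ℝ)))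
            * Y ^ u * Z ^ (r + s - u))) X
      = ∑ ℓ ∈ Finset.range (φ + 1),
          gaussQ q (φ : ℝ) ℓ * q ^ (2 * ((φ : ℝ) - (ℓ : ℝ)) * ((r : ℝ) - (ℓ : ℝ))) *
            ∑ u ∈ Finset.range ((r + s - φ) + 1),
              (∑ i ∈ Finset.range (u + 1),
                  q ^ (2 * (i : ℝ) * ((s : ℝ) - ((φ : ℝ) - (ℓ : ℝ)))) *
                    (f i lam * betaQ q ((r : ℝ) - (i : ℝ)) ℓ) *
                    (g (u - i) (lam - 2 * (i : ℝ)) *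
                      betaQ q ((s : ℝ) - ((u : ℝ) - (i : ℝ))) (φ - ℓ)))
                * Y ^ u * X ^ ((r + s - φ) - u) := by
  have h0 : 0 < q := by linarith
  rw [iterate_qDeriv_sum hq _ _ _ _ hX]
  have hsub : Finset.range (r + s - φ + 1) ⊆ Finset.range (r + s + 1) :=
    Finset.range_subset_range.2 (by omega)
  rw [← Finset.sum_subset hsub]
  · simp only [Finset.mul_sum]
    rw [Finset.sum_comm]
    refine Finset.sum_congr rfl fun u hu => ?_
    have hu' : u ≤ r + s - φ := Nat.lt_succ_iff.1 (Finset.mem_range.1 hu)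
    rw [show r + s - u - φ = r + s - φ - u by omega]
    simp only [← mul_assoc, ← Finset.sum_mul]
    rw [mul_right_comm _ (Y ^ u)]
    congr 2
    simp only [Finset.mul_sum, Finset.sum_mul]
    rw [Finset.sum_comm]
    refine Finset.sum_congr rfl fun i _ => ?_
    rw [Nat.cast_sub (by omega), show ((r + s : ℕ) : ℝ) - (u : ℝ) =
      ((r : ℝ) - (i : ℝ)) + ((s : ℝ) - ((u : ℝ) - (i : ℝ))) by push_cast; ring,
      betaQ_add hq, Finset.mul_sum]
    refine Finset.sum_congr rfl fun l _ => ?_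
    have e : q ^ (2 * i * s) * q ^ (2 * ((φ : ℝ) - (l : ℝ)) * ((r : ℝ) - (i : ℝ) - (l : ℝ))) =
        q ^ (2 * ((φ : ℝ) - (l : ℝ)) * ((r : ℝ) - (l : ℝ))) *
          q ^ (2 * (i : ℝ) * ((s : ℝ) - ((φ : ℝ) - (l : ℝ)))) := by
      rw [← Real.rpow_natCast, ← Real.rpow_add h0, ← Real.rpow_add h0]
      push_cast
      ring_nf
    linear_combination (f i lam * g (u - i) (lam - 2 * (i : ℝ)) * gaussQ q (φ : ℝ) l *
      betaQ q ((r : ℝ) - (i : ℝ)) l * betaQ q ((s : ℝ) - ((u : ℝ) - (i : ℝ))) (φ - l)) * e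
  · intro u hu hu'
    rw [Finset.mem_range] at hu hu'
    rw [betaQ_natCast_eq_zero q (by omega), mul_zero, zero_mul]
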